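/- Let σ be a REC-social welfare function satisfying unanimity and independence (on REC-measurable profiles), where X has at least 3 elements, and let U be an ultrafilter on the Boolean algebra REC that is decisive for σ. If σ is pairwise computable, then σ satisfies DDC with respect to U: the partial function β_σ has an extension to a partial recursive function. -/

import Mathlib

/-- A weak order: asymmetric and negatively transitive. -/
def IsWeakPref {X : Type*} (P : X → X → Prop) : Prop :=
  (∀ x y : X, P x y → ¬ P y x) ∧ ∀ x y z : X, ¬ P x y → ¬ P y z → ¬ P x z

/-- A profile assigns a weak order on the alternatives to each voter in `ℕ`. -/
def IsProf {X : Type*} (f : ℕ → X → X → Prop) : Prop := ∀ v : ℕ, IsWeakPref (f v)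

/-- A set of naturals is computable if its membership predicate is computable. -/
def ComputableSet (A : Set ℕ) : Prop := ComputablePred (· ∈ A)

/-- A profile is REC-measurable if each of its preference coalitions is computable. -/
def RECMeasurable {X : Type*} (f : ℕ → X → X → Prop) : Prop :=
  ∀ a b : X, ComputableSet {v : ℕ | f v a b}

/-- The Gödel numbering of partial recursive functions via `Nat.Partrec.Code`. -/
def phi (e : ℕ) : ℕ →. ℕ := (Denumerable.ofNat Nat.Partrec.Code e).eval

/-- `e` indexes `A` if `φ_e` is the characteristic function of `A`. -/
def Indexes (e : ℕ) (A : Set ℕ) : Prop :=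
  ∀ n : ℕ, (n ∈ A → phi e n = Part.some 1) ∧ (n ∉ A → phi e n = Part.some 0)

/-- The set of Gödel codes of characteristic functions of computable sets. -/
def RecSet : Set ℕ := {e : ℕ | ∃ A : Set ℕ, ComputableSet A ∧ Indexes e A}

/-- A set of naturals is r.e. if it is the domain of a partial recursive function. -/
def REset (A : Set ℕ) : Prop :=
  ∃ g : ℕ →. ℕ, Partrec g ∧ ∀ n : ℕ, n ∈ A ↔ (g n).Dom

/-- A REC-measurable profile (its restriction is what a REC-social welfare
function is defined on). -/
def GoodProfile {X : Type*} (f : ℕ → X → X → Prop) : Prop :=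
  IsProf f ∧ RECMeasurable f

/-- Unanimity, on REC-measurable profiles. -/
def Unanimity {X : Type*} (σ : (ℕ → X → X → Prop) → X → X → Prop) : Prop :=
  ∀ (x y : X) (f : ℕ → X → X → Prop), GoodProfile f → (∀ v : ℕ, f v x y) → σ f x y

/-- Independence, on REC-measurable profiles. -/
def Independence {X : Type*} (σ : (ℕ → X → X → Prop) → X → X → Prop) : Prop :=
  ∀ (x y : X) (f g : ℕ → X → X → Prop), GoodProfile f → GoodProfile g →
    (∀ v : ℕ, (f v x y ↔ g v x y) ∧ (f v y x ↔ g v y x)) →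
    ((σ f x y ↔ σ g x y) ∧ (σ f y x ↔ σ g y x))

/-- Dictatorship, on REC-measurable profiles. -/
def Dictatorial {X : Type*} (σ : (ℕ → X → X → Prop) → X → X → Prop) : Prop :=
  ∃ v0 : ℕ, ∀ (x y : X) (f : ℕ → X → X → Prop), GoodProfile f → f v0 x y → σ f x y

/-- An ultrafilter on the Boolean algebra REC of computable subsets of `ℕ`. -/
def RECUltrafilter (𝒰 : Set (Set ℕ)) : Prop :=
  (∀ A ∈ 𝒰, ComputableSet A) ∧
  (∀ A B : Set ℕ, A ∈ 𝒰 → ComputableSet B → A ⊆ B → B ∈ 𝒰) ∧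
  (∀ A B : Set ℕ, A ∈ 𝒰 → B ∈ 𝒰 → A ∩ B ∈ 𝒰) ∧
  (∅ : Set ℕ) ∉ 𝒰 ∧
  ∀ A : Set ℕ, ComputableSet A → Xor' (A ∈ 𝒰) (Aᶜ ∈ 𝒰)

/-- `𝒰` is decisive for `σ`: coalitions in `𝒰` decide the verdict. -/
def Decisive {X : Type*} (σ : (ℕ → X → X → Prop) → X → X → Prop)
    (𝒰 : Set (Set ℕ)) : Prop :=
  ∀ U ∈ 𝒰, ∀ (x y : X) (f : ℕ → X → X → Prop), GoodProfile f →
    (∀ v ∈ U, f v x y) → σ f x y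

/-- Pairwise computability: for each ordered pair of distinct alternatives there
is a partial recursive function deciding the verdict from any code of the
restricted profile. -/
def PairwiseComputable {X : Type*}
    (σ : (ℕ → X → X → Prop) → X → X → Prop) : Prop :=
  ∀ x y : X, x ≠ y → ∃ γ : ℕ →. ℕ, Partrec γ ∧
    ∀ f : ℕ → X → X → Prop, GoodProfile f → ∀ e1 e2 e3 : ℕ,
      Indexes e1 {v : ℕ | f v x y} → Indexes e2 {v : ℕ | f v y x} →
      Indexes e3 {v : ℕ | ¬ f v x y ∧ ¬ f v y x} →
      (σ f x y → γ (Nat.pair e1 (Nat.pair e2 e3)) = Part.some 1) ∧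
      (¬ σ f x y → γ (Nat.pair e1 (Nat.pair e2 e3)) = Part.some 0)

/-- Decidability of Decisive Coalitions w.r.t. `𝒰`: the partial function `β_σ`
(deciding membership in `𝒰` from indices of computable sets) extends to a
partial recursive function. -/
def DDC (𝒰 : Set (Set ℕ)) : Prop :=
  ∃ g : ℕ →. ℕ, Partrec g ∧ ∀ (e : ℕ) (A : Set ℕ), ComputableSet A → Indexes e A →
    (A ∈ 𝒰 → g e = Part.some 1) ∧ (A ∉ 𝒰 → g e = Part.some 0)

/-!
Given an index `e` of a computable set `A`, consider the profile in which the voters in `A` rank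
one block of alternatives strictly below its complement and all other voters rank the two blocks
the other way round. For `x` and `y` taken from different blocks, the coalition preferring `y` is
`A`, the coalition preferring `x` is `Aᶜ`, and nobody is indifferent; hence a code of the profile
restricted to `{x, y}` can be computed from `e`. Since one of `A` and `Aᶜ` is decisive and the
verdict is asymmetric, society prefers `y` to `x` exactly when `A` belongs to the ultrafilter, so
the procedure that computes the verdict also decides membership of `A`.
-/

theorem ComputableSet.compl {A : Set ℕ} (hA : ComputableSet A) : ComputableSet Aᶜ :=
  ComputablePred.not hA

theorem computableSet_empty : ComputableSet ∅ :=
  ⟨fun _ => inferInstanceAs (Decidable False), Computable.const false⟩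

theorem exists_phi_eq {g : ℕ →. ℕ} (hg : Partrec g) : ∃ e, phi e = g := by
  obtain ⟨c, hc⟩ := Nat.Partrec.Code.exists_code.1 (Partrec.nat_iff.1 hg)
  exact ⟨Encodable.encode c, by rw [phi, Denumerable.ofNat_encode, hc]⟩

theorem exists_computable_phi_eq_bind {g : ℕ →. ℕ} (hg : Partrec g) :
    ∃ t : ℕ → ℕ, Computable t ∧ ∀ e n, phi (t e) n = (phi e n).bind g := by
  obtain ⟨c, hc⟩ := exists_phi_eq hg
  refine ⟨fun e => Encodable.encode
    ((Denumerable.ofNat Nat.Partrec.Code c).comp (Denumerable.ofNat Nat.Partrec.Code e)), ?_, ?_⟩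
  · exact (Primrec.encode.comp (Nat.Partrec.Code.primrec₂_comp.comp (Primrec.const _)
      (Primrec.ofNat Nat.Partrec.Code))).to_comp
  · intro e n
    rw [← hc, phi, Denumerable.ofNat_encode]
    rfl

theorem ComputableSet.exists_indexes {A : Set ℕ} (hA : ComputableSet A) : ∃ e, Indexes e A := by
  obtain ⟨_, hchar⟩ := hA
  obtain ⟨e, he⟩ := exists_phi_eq
    (Computable.cond hchar (Computable.const 1) (Computable.const 0)).partrec
  exact ⟨e, fun n => ⟨fun hn => by simp [he, hn], fun hn => by simp [he, hn]⟩⟩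

theorem exists_computable_indexes_compl :
    ∃ t : ℕ → ℕ, Computable t ∧ ∀ ⦃e : ℕ⦄ ⦃A : Set ℕ⦄, Indexes e A → Indexes (t e) Aᶜ := by
  have hflip : Computable fun n : ℕ => 1 - n :=
    (Primrec.nat_sub.comp (Primrec.const 1) Primrec.id).to_comp
  obtain ⟨t, ht, hphi⟩ := exists_computable_phi_eq_bind hflip.partrec
  refine ⟨t, ht, fun e A he n => ⟨fun hn => ?_, fun hn => ?_⟩⟩
  · rw [hphi, (he n).2 hn]
    exact Part.bind_some _ _
  · rw [hphi, (he n).1 (not_not.1 hn)]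
    exact Part.bind_some _ _

theorem isWeakPref_and_not {X : Type*} (p : X → Prop) : IsWeakPref fun x y => p x ∧ ¬ p y :=
  ⟨fun _ _ hxy hyx => hxy.2 hyx.1, fun _ _ _ => by tauto⟩

/-- The profile in which every voter is indifferent within `S` and within `Sᶜ`, voters in `A` rank
`S` strictly below `Sᶜ`, and the remaining voters rank `Sᶜ` strictly below `S`. It is encoded by
the set of alternatives at the lower level of voter `v`, namely `{x | v ∈ A ↔ x ∈ S}`. -/
def splitProfile {X : Type*} (A : Set ℕ) (S : Set X) (v : ℕ) (x y : X) : Prop :=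
  (v ∈ A ↔ x ∈ S) ∧ ¬ (v ∈ A ↔ y ∈ S)

section SplitProfile

variable {X : Type*} {A : Set ℕ} {S : Set X} {x y : X}

theorem setOf_splitProfile_of_mem_of_notMem (hx : x ∈ S) (hy : y ∉ S) :
    {v | splitProfile A S v x y} = A := by
  ext v
  simp [splitProfile, hx, hy]

theorem setOf_splitProfile_of_notMem_of_mem (hx : x ∉ S) (hy : y ∈ S) :
    {v | splitProfile A S v x y} = Aᶜ := by
  ext v
  simp [splitProfile, hx, hy]

theorem setOf_splitProfile_of_mem_iff_mem (hxy : x ∈ S ↔ y ∈ S) :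
    {v | splitProfile A S v x y} = ∅ := by
  ext v
  simp [splitProfile, hxy]

theorem setOf_not_splitProfile_and_not (hx : x ∈ S) (hy : y ∉ S) :
    {v | ¬ splitProfile A S v x y ∧ ¬ splitProfile A S v y x} = ∅ := by
  ext v
  simp [splitProfile, hx, hy]

theorem goodProfile_splitProfile (hA : ComputableSet A) (S : Set X) :
    GoodProfile (splitProfile A S) := by
  refine ⟨fun v => isWeakPref_and_not fun x => v ∈ A ↔ x ∈ S, fun x y => ?_⟩
  by_cases hxy : x ∈ S ↔ y ∈ S
  · rw [setOf_splitProfile_of_mem_iff_mem hxy]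
    exact computableSet_empty
  by_cases hx : x ∈ S
  · rw [setOf_splitProfile_of_mem_of_notMem hx (by tauto)]
    exact hA
  · rw [setOf_splitProfile_of_notMem_of_mem hx (by tauto)]
    exact hA.compl

theorem Decisive.splitProfile_iff_mem {σ : (ℕ → X → X → Prop) → X → X → Prop} {𝒰 : Set (Set ℕ)}
    (hD : Decisive σ 𝒰) (hasymm : ∀ f, GoodProfile f → ∀ x y, σ f x y → ¬ σ f y x)
    (hA : ComputableSet A) (hAU : A ∈ 𝒰 ∨ Aᶜ ∈ 𝒰) (hx : x ∈ S) (hy : y ∉ S) :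
    σ (splitProfile A S) x y ↔ A ∈ 𝒰 := by
  have hgood : GoodProfile (splitProfile A S) := goodProfile_splitProfile hA S
  refine ⟨fun hσ => hAU.resolve_right fun hAc => ?_, fun hAmem => ?_⟩
  · exact hasymm _ hgood x y hσ
      (hD _ hAc y x _ hgood (setOf_splitProfile_of_notMem_of_mem hy hx).ge)
  · exact hD _ hAmem x y _ hgood (setOf_splitProfile_of_mem_of_notMem hx hy).ge

end SplitProfile

theorem pairwise_computable_implies_ddc_general {X : Type*} [Nontrivial X]
    (σ : (ℕ → X → X → Prop) → X → X → Prop)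
    (hasymm : ∀ f, GoodProfile f → ∀ x y, σ f x y → ¬ σ f y x)
    (𝒰 : Set (Set ℕ)) (h𝒰 : ∀ A, ComputableSet A → A ∈ 𝒰 ∨ Aᶜ ∈ 𝒰) (hD : Decisive σ 𝒰)
    (hPC : PairwiseComputable σ) :
    DDC 𝒰 := by
  obtain ⟨x, y, hxy⟩ := exists_pair_ne X
  have hx : x ∈ ({x} : Set X) := Set.mem_singleton x
  have hy : y ∉ ({x} : Set X) := hxy.symm
  obtain ⟨γ, hγ, hverdict⟩ := hPC x y hxy
  obtain ⟨t, ht, hcompl⟩ := exists_computable_indexes_compl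
  obtain ⟨e₀, he₀⟩ := computableSet_empty.exists_indexes
  refine ⟨fun e => γ (Nat.pair e (Nat.pair (t e) e₀)), ?_, fun e A hA he => ?_⟩
  · exact hγ.comp (Primrec₂.natPair.to_comp.comp Computable.id
      (Primrec₂.natPair.to_comp.comp ht (Computable.const e₀)))
  · rw [← hD.splitProfile_iff_mem hasymm hA (h𝒰 A hA) hx hy]
    apply hverdict _ (goodProfile_splitProfile hA {x})
    · rwa [setOf_splitProfile_of_mem_of_notMem hx hy]
    · rw [setOf_splitProfile_of_notMem_of_mem hy hx]
      exact hcompl he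
    · rwa [setOf_not_splitProfile_and_not hx hy]

/-- a pairwise computable REC-social welfare function with decisive
REC-ultrafilter `𝒰` satisfies DDC w.r.t. `𝒰`. -/
theorem pairwise_computable_implies_ddc {X : Type*}
    (hX : ∃ a b c : X, a ≠ b ∧ a ≠ c ∧ b ≠ c)
    (σ : (ℕ → X → X → Prop) → X → X → Prop)
    (hW : ∀ f : ℕ → X → X → Prop, GoodProfile f → IsWeakPref (σ f))
    (hU : Unanimity σ) (hI : Independence σ)
    (𝒰 : Set (Set ℕ)) (h𝒰 : RECUltrafilter 𝒰) (hD : Decisive σ 𝒰)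
    (hPC : PairwiseComputable σ) :
    DDC 𝒰 := by
  have : Nontrivial X := let ⟨a, b, _, hab, _⟩ := hX; ⟨a, b, hab⟩
  exact pairwise_computable_implies_ddc_general σ (fun f hf => (hW f hf).1) 𝒰
    (fun A hA => Xor.or (h𝒰.2.2.2.2 A hA)) hD hPC
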